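/- arXiv:2012.04087 — 8 statements merged into one kernel-verified Lean document; each statement's English description precedes it below -/
import Mathlib

section
/- Let A ∈ ℂ^{L×N} be a generalized incidence matrix of a connected network. Then rank(A) ≥ |N| − 1; equivalently, dim Null(A) ≤ 1. Moreover, if rank(A) = |N| − 1 (i.e., A is not full column rank), then every nonzero vector x ∈ Null(A) has all of its entries nonzero. -/
open Matrix

/-- Let `A ∈ ℂ^{L×N}` be a generalized incidence matrix of a connected
network (row `l` has entry `1` in column `e1 l`, entry `-a l` in column `e2 l`, `0`
elsewhere, with `e1 l ≠ e2 l` and `a l ≠ 0`). Then `rank A ≥ |N| - 1`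
(equivalently, `dim Null(A) ≤ 1`); moreover, if `rank A = |N| - 1` (i.e. `A` is not of
full column rank), then every nonzero vector in `Null(A)` has all entries nonzero. -/
theorem stmt5 {L N : Type*} [Fintype L] [Fintype N] [DecidableEq N]
    [Nonempty L] [Nonempty N]
    (e1 e2 : L → N) (a : L → ℂ)
    (hends : ∀ l, e1 l ≠ e2 l) (ha : ∀ l, a l ≠ 0)
    (A : Matrix L N ℂ)
    (hA : ∀ l j, A l j = if j = e1 l then 1 else if j = e2 l then -(a l) else 0)
    (hconn : (SimpleGraph.fromRel fun i k => ∃ l, e1 l = i ∧ e2 l = k).Connected) :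
    Fintype.card N - 1 ≤ A.rank ∧
    Module.finrank ℂ (LinearMap.ker A.mulVecLin) ≤ 1 ∧
    (A.rank = Fintype.card N - 1 →
      ∀ x : N → ℂ, A.mulVec x = 0 → x ≠ 0 → ∀ i, x i ≠ 0) := by
  have hrow : ∀ x : N → ℂ, A.mulVec x = 0 → ∀ l, x (e1 l) = a l * x (e2 l) := by
    intro x hx l
    have h := congrFun hx l
    have h2 : ∀ j, A l j * x j =
        (if j = e1 l then x j else 0) + (if j = e2 l then -(a l) * x j else 0) := by
      intro j
      rw [hA]
      by_cases h1 : j = e1 l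
      · have h3 : j ≠ e2 l := fun h => hends l (h1.symm.trans h)
        simp only [if_pos h1, if_neg h3]; ring
      · simp only [if_neg h1]
        split_ifs <;> ring
    simp only [Matrix.mulVec, dotProduct, Pi.zero_apply] at h
    rw [Finset.sum_congr rfl (fun j _ => h2 j), Finset.sum_add_distrib] at h
    simp only [Finset.sum_ite_eq', Finset.mem_univ, if_true] at h
    linear_combination h
  have key : ∀ x : N → ℂ, A.mulVec x = 0 → ∀ i, x i = 0 → x = 0 := by
    intro x hx i hi
    funext j
    obtain ⟨w⟩ := hconn.preconnected i j
    induction w with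
    | nil => exact hi
    | cons hadj _ ih =>
      apply ih
      rw [SimpleGraph.fromRel_adj] at hadj
      obtain ⟨_, ⟨l, rfl, rfl⟩ | ⟨l, rfl, rfl⟩⟩ := hadj
      · have := hrow x hx l
        rw [hi] at this
        exact (mul_eq_zero.mp this.symm).resolve_left (ha l)
      · rw [hrow x hx l, hi, mul_zero]
  have hker : Module.finrank ℂ (LinearMap.ker A.mulVecLin) ≤ 1 := by
    obtain ⟨i⟩ := ‹Nonempty N›
    let f : LinearMap.ker A.mulVecLin →ₗ[ℂ] ℂ :=
      (LinearMap.proj i).comp (LinearMap.ker A.mulVecLin).subtype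
    have hf : Function.Injective f := by
      rw [injective_iff_map_eq_zero]
      rintro ⟨x, hx⟩ h
      exact Subtype.ext (key x (by simpa using hx) i h)
    simpa using LinearMap.finrank_le_finrank_of_injective hf
  refine ⟨?_, hker, fun _ x hx hne i hi => hne (key x hx i hi)⟩
  have h := LinearMap.finrank_range_add_finrank_ker A.mulVecLin
  rw [Module.finrank_fintype_fun_eq_card] at h
  rw [Matrix.rank]
  omega
end

section
/- Let A ∈ ℂ^{L×N} be a generalized incidence matrix of a connected network with |L| = |N| − 1 (so the network graph is a tree). Then rank(A) = |N| − 1, and Null(A) is one-dimensional, spanned by a vector all of whose entries are nonzero. -/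
open Matrix

/-- Let `A ∈ ℂ^{L×N}` be a generalized incidence matrix of a connected
network with `|L| = |N| - 1` (so the network graph is a tree). Then
`rank A = |N| - 1`, and `Null(A)` is one-dimensional, spanned by a vector all of whose
entries are nonzero. -/
theorem stmt6 {L N : Type*} [Fintype L] [Fintype N] [DecidableEq N]
    [Nonempty L] [Nonempty N]
    (e1 e2 : L → N) (a : L → ℂ)
    (hends : ∀ l, e1 l ≠ e2 l) (ha : ∀ l, a l ≠ 0)
    (A : Matrix L N ℂ)
    (hA : ∀ l j, A l j = if j = e1 l then 1 else if j = e2 l then -(a l) else 0)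
    (hconn : (SimpleGraph.fromRel fun i k => ∃ l, e1 l = i ∧ e2 l = k).Connected)
    (hcard : Fintype.card L = Fintype.card N - 1) :
    A.rank = Fintype.card N - 1 ∧
    ∃ v : N → ℂ, (∀ i, v i ≠ 0) ∧
      ∀ x : N → ℂ, A.mulVec x = 0 ↔ ∃ c : ℂ, x = c • v := by
  have hNpos : 0 < Fintype.card N := Fintype.card_pos
  have hmul : ∀ (x : N → ℂ) l, A.mulVec x l = x (e1 l) - a l * x (e2 l) := by
    intro x l
    have h : ∀ j, A l j * x j
        = (if j = e1 l then x j else 0) + (if j = e2 l then -(a l) * x j else 0) := by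
      intro j
      rw [hA]
      have := hends l
      by_cases h1 : j = e1 l
      · subst h1
        simp [this]
      · simp [h1]
    simp only [Matrix.mulVec, dotProduct, h, Finset.sum_add_distrib]
    simp [sub_eq_add_neg]
  have hker : ∀ x : N → ℂ, A.mulVec x = 0 → ∀ l, x (e1 l) = a l * x (e2 l) := by
    intro x hx l
    have := congrFun hx l
    rw [hmul] at this
    exact sub_eq_zero.mp this
  have hz : ∀ x : N → ℂ, A.mulVec x = 0 → ∀ i, x i = 0 → x = 0 := by
    intro x hx i hi
    have hw : ∀ u w, (SimpleGraph.fromRel fun i k => ∃ l, e1 l = i ∧ e2 l = k).Walk u w →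
        x u = 0 → x w = 0 := by
      intro u w p
      induction p with
      | nil => exact id
      | cons h p ih =>
        intro hu
        apply ih
        rw [SimpleGraph.fromRel_adj] at h
        rcases h with ⟨_, ⟨l, rfl, rfl⟩ | ⟨l, rfl, rfl⟩⟩
        · have := hker x hx l
          rw [hu] at this
          exact (mul_eq_zero.mp this.symm).resolve_left (ha l)
        · rw [hker x hx l, hu, mul_zero]
    funext j
    obtain ⟨p⟩ := hconn.preconnected i j
    exact hw i j p hi
  have hne : LinearMap.ker A.mulVecLin ≠ ⊥ := by
    apply LinearMap.ker_ne_bot_of_finrank_lt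
    simp only [Module.finrank_fintype_fun_eq_card]
    omega
  obtain ⟨v, hv, hv0⟩ := (Submodule.ne_bot_iff _).mp hne
  have hv' : A.mulVec v = 0 := hv
  have hvi : ∀ i, v i ≠ 0 := fun i h => hv0 (hz v hv' i h)
  have hspan : ∀ x : N → ℂ, A.mulVec x = 0 ↔ ∃ c : ℂ, x = c • v := by
    intro x
    constructor
    · intro hx
      obtain ⟨i⟩ := (inferInstance : Nonempty N)
      refine ⟨x i / v i, sub_eq_zero.mp (hz _ ?_ i ?_)⟩
      · rw [Matrix.mulVec_sub, Matrix.mulVec_smul, hx, hv']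
        simp
      · simp [hvi i]
    · rintro ⟨c, rfl⟩
      rw [Matrix.mulVec_smul, hv', smul_zero]
  refine ⟨?_, v, hvi, hspan⟩
  have hk : LinearMap.ker A.mulVecLin = Submodule.span ℂ {v} := by
    ext x
    rw [LinearMap.mem_ker, Matrix.mulVecLin_apply, hspan, Submodule.mem_span_singleton]
    simp only [eq_comm]
  have h1 := LinearMap.finrank_range_add_finrank_ker A.mulVecLin
  rw [hk, finrank_span_singleton hv0, Module.finrank_fintype_fun_eq_card] at h1
  unfold Matrix.rank
  omega
end

section
/- Let A ∈ ℂ^{L×N} be a generalized incidence matrix of a connected network, let y_L ∈ ℂ^L have all entries nonzero, let y_T ∈ ℂ^N, and let Y_N = Aᴴ diag(y_L) A + diag(y_T). If Null(Y_N) ⊆ Null(A), then: rank(Y_N) = rank(A) in case y_T = 0, and rank(Y_N) = |N| (i.e., Y_N is invertible) in case y_T ≠ 0. -/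
open Matrix

/-- generalized Theorem 1. Let `A ∈ ℂ^{L×N}` be a generalized incidence
matrix of a connected network, `y_L ∈ ℂ^L` with all entries nonzero, `y_T ∈ ℂ^N`, and
`Y_N = Aᴴ diag(y_L) A + diag(y_T)`. If `Null(Y_N) ⊆ Null(A)`, then `rank Y_N = rank A`
when `y_T = 0`, and `rank Y_N = |N|` (i.e. `Y_N` is invertible) when `y_T ≠ 0`. -/
theorem stmt7 {L N : Type*} [Fintype L] [Fintype N] [DecidableEq N] [DecidableEq L]
    [Nonempty L] [Nonempty N]
    (e1 e2 : L → N) (a : L → ℂ)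
    (hends : ∀ l, e1 l ≠ e2 l) (ha : ∀ l, a l ≠ 0)
    (A : Matrix L N ℂ)
    (hA : ∀ l j, A l j = if j = e1 l then 1 else if j = e2 l then -(a l) else 0)
    (hconn : (SimpleGraph.fromRel fun i k => ∃ l, e1 l = i ∧ e2 l = k).Connected)
    (yL : L → ℂ) (hyL : ∀ l, yL l ≠ 0) (yT : N → ℂ)
    (hnull : ∀ x : N → ℂ,
      (Aᴴ * Matrix.diagonal yL * A + Matrix.diagonal yT).mulVec x = 0 → A.mulVec x = 0) :
    (yT = 0 → (Aᴴ * Matrix.diagonal yL * A + Matrix.diagonal yT).rank = A.rank) ∧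
    (yT ≠ 0 → (Aᴴ * Matrix.diagonal yL * A + Matrix.diagonal yT).rank = Fintype.card N ∧
      IsUnit (Aᴴ * Matrix.diagonal yL * A + Matrix.diagonal yT)) := by
  constructor
  · rintro rfl
    apply le_antisymm
    · rw [show Matrix.diagonal (0 : N → ℂ) = 0 from Matrix.diagonal_zero, add_zero]
      exact Matrix.rank_mul_le_right _ _
    · generalize (Aᴴ * Matrix.diagonal yL * A + Matrix.diagonal 0) = Y at hnull
      have hk : LinearMap.ker Y.mulVecLin ≤ LinearMap.ker A.mulVecLin := by
        intro x hx
        simp only [LinearMap.mem_ker, Matrix.mulVecLin_apply] at hx ⊢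
        exact hnull x hx
      have h1 := Submodule.finrank_mono hk
      have h2 := LinearMap.finrank_range_add_finrank_ker Y.mulVecLin
      have h3 := LinearMap.finrank_range_add_finrank_ker A.mulVecLin
      unfold Matrix.rank
      omega
  · intro hT
    obtain ⟨j, hj⟩ := Function.ne_iff.mp hT
    have key : ∀ x : N → ℂ,
        (Aᴴ * Matrix.diagonal yL * A + Matrix.diagonal yT).mulVec x = 0 → x = 0 := by
      intro x hx
      have hAx := hnull x hx
      rw [Matrix.add_mulVec, ← Matrix.mulVec_mulVec, hAx, Matrix.mulVec_zero, zero_add] at hx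
      have hxj : x j = 0 := by
        have := congrFun hx j
        rw [Matrix.mulVec_diagonal] at this
        exact (mul_eq_zero.mp this).resolve_left hj
      have hrow : ∀ l, x (e1 l) = a l * x (e2 l) := by
        intro l
        have h := congrFun hAx l
        have h2 : ∀ i, A l i * x i = (if i = e1 l then x i else 0)
            + (if i = e2 l then -(a l) * x i else 0) := by
          intro i
          rw [hA]
          by_cases h1 : i = e1 l
          · have : i ≠ e2 l := h1 ▸ hends l
            simp [h1, hends l]
          · simp [h1]
        simp only [Matrix.mulVec, dotProduct, h2, Finset.sum_add_distrib, Finset.sum_ite_eq',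
          Finset.sum_ite_eq, Finset.mem_univ, if_true, Pi.zero_apply] at h
        linear_combination h
      have hw : ∀ u v, (SimpleGraph.fromRel fun i k => ∃ l, e1 l = i ∧ e2 l = k).Walk u v →
          x u = 0 → x v = 0 := by
        intro u v p
        induction p with
        | nil => exact id
        | cons h p ih =>
          intro h0
          apply ih
          rw [SimpleGraph.fromRel_adj] at h
          obtain ⟨-, ⟨l, rfl, rfl⟩ | ⟨l, rfl, rfl⟩⟩ := h
          · rw [hrow] at h0
            exact (mul_eq_zero.mp h0).resolve_left (ha l)
          · rw [hrow, h0, mul_zero]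
      funext i
      obtain ⟨p⟩ := hconn.preconnected j i
      exact hw j i p hxj
    have hu : IsUnit (Aᴴ * Matrix.diagonal yL * A + Matrix.diagonal yT) := by
      rw [← Matrix.mulVec_injective_iff_isUnit]
      intro u v huv
      apply sub_eq_zero.mp
      apply key
      rw [Matrix.mulVec_sub]
      exact sub_eq_zero.mpr huv
    exact ⟨Matrix.rank_of_isUnit _ hu, hu⟩
end

section
/- Let A ∈ ℂ^{L×N} be a generalized incidence matrix of a connected network, let y_L ∈ ℂ^L have all entries nonzero with Re(y_l) ≥ 0 for every branch l, let y_T ∈ ℂ^N satisfy Re(y_{T,i}) ≥ 0 for every node i, and let Y_N = Aᴴ diag(y_L) A + diag(y_T). Then for every v ∈ ℂ^N with Y_N v = 0: (a) (Av)_l = 0 for every branch l with Re(y_l) > 0; and (b) v_i = 0 for every node i such that either Re(y_{T,i}) > 0, or y_{T,i} ≠ 0 and i is not an endpoint of any branch l with Re(y_l) = 0. -/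
open Matrix

/-- Let `A ∈ ℂ^{L×N}` be a generalized incidence matrix of a connected
network, `y_L ∈ ℂ^L` with all entries nonzero and `Re (y_L l) ≥ 0`, `y_T ∈ ℂ^N` with
`Re (y_T i) ≥ 0`, and `Y_N = Aᴴ diag(y_L) A + diag(y_T)`. Then for every `v` with
`Y_N v = 0`: (a) `(A v)_l = 0` for every branch `l` with `Re (y_L l) > 0`; and
(b) `v_i = 0` for every node `i` such that either `Re (y_T i) > 0`, or `y_T i ≠ 0` and
`i` is not an endpoint of any branch `l` with `Re (y_L l) = 0`. -/
theorem stmt10 {L N : Type*} [Fintype L] [Fintype N] [DecidableEq N] [DecidableEq L]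
    [Nonempty L] [Nonempty N]
    (e1 e2 : L → N) (a : L → ℂ)
    (hends : ∀ l, e1 l ≠ e2 l) (ha : ∀ l, a l ≠ 0)
    (A : Matrix L N ℂ)
    (hA : ∀ l j, A l j = if j = e1 l then 1 else if j = e2 l then -(a l) else 0)
    (hconn : (SimpleGraph.fromRel fun i k => ∃ l, e1 l = i ∧ e2 l = k).Connected)
    (yL : L → ℂ) (hyL : ∀ l, yL l ≠ 0) (hyLre : ∀ l, 0 ≤ (yL l).re)
    (yT : N → ℂ) (hyTre : ∀ i, 0 ≤ (yT i).re) :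
    ∀ v : N → ℂ,
      (Aᴴ * Matrix.diagonal yL * A + Matrix.diagonal yT).mulVec v = 0 →
      (∀ l, 0 < (yL l).re → A.mulVec v l = 0) ∧
      (∀ i, (0 < (yT i).re ∨
          (yT i ≠ 0 ∧ ¬∃ l, (yL l).re = 0 ∧ (e1 l = i ∨ e2 l = i))) → v i = 0) := by
  intro v hv
  have hrow : ∀ i, ∑ l, star (A l i) * (yL l * (A.mulVec v) l) + yT i * v i = 0 := by
    intro i
    have h := congrFun hv i
    rw [Matrix.add_mulVec, ← Matrix.mulVec_mulVec, ← Matrix.mulVec_mulVec] at h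
    simp only [Pi.add_apply, Matrix.mulVec_diagonal, Pi.zero_apply] at h
    rw [← h]
    congr 1
    simp only [Matrix.mulVec, dotProduct, Matrix.conjTranspose_apply, Matrix.diagonal_apply,
      ite_mul, zero_mul, Finset.sum_ite_eq, Finset.mem_univ, if_true]
  have hq : ∑ l, yL l * (Complex.normSq ((A.mulVec v) l) : ℂ)
      + ∑ i, yT i * (Complex.normSq (v i) : ℂ) = 0 := by
    have h : ∑ i, star (v i) * (∑ l, star (A l i) * (yL l * (A.mulVec v) l) + yT i * v i) = 0 :=
      Finset.sum_eq_zero fun i _ => by rw [hrow i, mul_zero]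
    rw [← h]
    simp only [mul_add, Finset.sum_add_distrib, Finset.mul_sum]
    rw [Finset.sum_comm]
    congr 1
    · refine Finset.sum_congr rfl fun l _ => ?_
      have hs : star ((A.mulVec v) l) = ∑ i, star (v i) * star (A l i) := by
        simp only [Matrix.mulVec, dotProduct, star_sum, star_mul]
      rw [Complex.normSq_eq_conj_mul_self]
      change yL l * (star ((A.mulVec v) l) * _) = _
      rw [hs, Finset.sum_mul, Finset.mul_sum]
      refine Finset.sum_congr rfl fun i _ => ?_
      ring
    · refine Finset.sum_congr rfl fun i _ => ?_
      rw [Complex.normSq_eq_conj_mul_self]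
      change yT i * (star (v i) * _) = _
      ring
  have hre : ∑ l, (yL l).re * Complex.normSq ((A.mulVec v) l)
      + ∑ i, (yT i).re * Complex.normSq (v i) = 0 := by
    have h := congrArg Complex.re hq
    simpa only [Complex.add_re, Complex.re_sum, Complex.re_mul_ofReal, Complex.zero_re] using h
  have n1 : ∀ l ∈ Finset.univ, 0 ≤ (yL l).re * Complex.normSq ((A.mulVec v) l) :=
    fun l _ => mul_nonneg (hyLre l) (Complex.normSq_nonneg _)
  have n2 : ∀ i ∈ Finset.univ, 0 ≤ (yT i).re * Complex.normSq (v i) :=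
    fun l _ => mul_nonneg (hyTre l) (Complex.normSq_nonneg _)
  obtain ⟨z1, z2⟩ := (add_eq_zero_iff_of_nonneg (Finset.sum_nonneg n1) (Finset.sum_nonneg n2)).1 hre
  rw [Finset.sum_eq_zero_iff_of_nonneg n1] at z1
  rw [Finset.sum_eq_zero_iff_of_nonneg n2] at z2
  have hw : ∀ l, 0 < (yL l).re → A.mulVec v l = 0 := fun l hl =>
    Complex.normSq_eq_zero.1 ((mul_eq_zero.1 (z1 l (Finset.mem_univ l))).resolve_left hl.ne')
  refine ⟨hw, ?_⟩
  rintro i (hi | ⟨hi, hno⟩)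
  · exact Complex.normSq_eq_zero.1 ((mul_eq_zero.1 (z2 i (Finset.mem_univ i))).resolve_left hi.ne')
  · have h := hrow i
    rw [Finset.sum_eq_zero, zero_add] at h
    · exact (mul_eq_zero.1 h).resolve_left hi
    · intro l _
      rcases (hyLre l).lt_or_eq with hl | hl
      · rw [hw l hl, mul_zero, mul_zero]
      · have h1 : ¬ i = e1 l := fun h => hno ⟨l, hl.symm, Or.inl h.symm⟩
        have h2 : ¬ i = e2 l := fun h => hno ⟨l, hl.symm, Or.inr h.symm⟩
        rw [hA, if_neg h1, if_neg h2, star_zero, zero_mul]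
end

section
/- Let A ∈ ℂ^{L×N} be a generalized incidence matrix whose underlying simple graph on N (obtained by collapsing parallel branches) is a tree, let y_L ∈ ℂ^L have all entries nonzero, let y_T ∈ ℂ^N, and let Y_N = Aᴴ diag(y_L) A + diag(y_T). Fix a root node r ∈ N, orienting the tree so that every node n ≠ r has a unique parent p(n) and a set of children. For adjacent nodes p, n, let Y^{p,n} be the 2×2 matrix (with rows/columns ordered (p, n)) given by Y^{p,n} = Σ_l y_l · w_l w_lᴴ, summed over all branches l whose endpoints are p and n, where w_l ∈ ℂ^2 is the restriction of the conjugate of row l of A to the coordinates (p, n); write its entries y^{p,n}_{11}, y^{p,n}_{12}, y^{p,n}_{21}, y^{p,n}_{22}. Define, by recursion from the leaves upward: y^{sb}_n = y_{T,n} + Σ_{c child of n} y^b_c for every node n, and, for every node n ≠ r with parent p = p(n), y^b_n = y^{p,n}_{11} − y^{p,n}_{12} y^{p,n}_{21} / (y^{p,n}_{22} + y^{sb}_n). Assume that y^{p(n),n}_{22} + y^{sb}_n ≠ 0 for every node n ≠ r, and that y^{sb}_r ≠ 0. Then Null(Y_N) = {0}; in particular Null(Y_N) ⊆ Null(A) and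 Y_N is invertible. -/
open Matrix

/-- Theorem 3, Condition 1. Let `A ∈ ℂ^{L×N}` be a generalized
incidence matrix whose underlying simple graph is a tree, rooted at `r` with parent map
`p` (every branch joins a non-root node to its parent, every non-root node is adjacent
to its parent, and iterating `p` reaches the root). For adjacent nodes `q, n`, the `2×2`
matrix `Y^{q,n} = Σ_l y_l · w_l w_lᴴ` sums over all branches with endpoints `q` and `n`,
where `w_l` is the restriction of the conjugate of row `l` of `A` to coordinates
`(q, n)`. Given `ysb` and `yb` satisfying the leaves-upward recursion
`ysb n = y_{T,n} + Σ_{c child of n} yb c` and, for `n ≠ r` with parent `p n`,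
`yb n = Y^{pn,n}₁₁ − Y^{pn,n}₁₂ Y^{pn,n}₂₁ / (Y^{pn,n}₂₂ + ysb n)`, if
`Y^{p n,n}₂₂ + ysb n ≠ 0` for every `n ≠ r` and `ysb r ≠ 0`, then `Null(Y_N) = {0}`,
where `Y_N = Aᴴ diag(y_L) A + diag(y_T)`. -/
theorem stmt12 {L N : Type*} [Fintype L] [Fintype N] [DecidableEq N] [DecidableEq L]
    [Nonempty L] [Nonempty N]
    (e1 e2 : L → N) (a : L → ℂ)
    (hends : ∀ l, e1 l ≠ e2 l) (ha : ∀ l, a l ≠ 0)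
    (A : Matrix L N ℂ)
    (hA : ∀ l j, A l j = if j = e1 l then 1 else if j = e2 l then -(a l) else 0)
    (yL : L → ℂ) (hyL : ∀ l, yL l ≠ 0) (yT : N → ℂ)
    (r : N) (p : N → N)
    (hpr : p r = r)
    (hreach : ∀ n, ∃ m : ℕ, p^[m] n = r)
    (hadj : ∀ n, n ≠ r → ∃ l, (e1 l = n ∧ e2 l = p n) ∨ (e1 l = p n ∧ e2 l = n))
    (hbranch : ∀ l, (e1 l ≠ r ∧ p (e1 l) = e2 l) ∨ (e2 l ≠ r ∧ p (e2 l) = e1 l))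
    (Ypn : N → N → Matrix (Fin 2) (Fin 2) ℂ)
    (hYpn : ∀ q n, Ypn q n = ∑ l ∈ Finset.univ.filter
        (fun l => (e1 l = q ∧ e2 l = n) ∨ (e1 l = n ∧ e2 l = q)),
        yL l • Matrix.vecMulVec ![star (A l q), star (A l n)] ![A l q, A l n])
    (ysb yb : N → ℂ)
    (hysb : ∀ n, ysb n = yT n + ∑ c ∈ Finset.univ.filter (fun c => c ≠ r ∧ p c = n), yb c)
    (hyb : ∀ n, n ≠ r →
      yb n = Ypn (p n) n 0 0 - Ypn (p n) n 0 1 * Ypn (p n) n 1 0 / (Ypn (p n) n 1 1 + ysb n))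
    (hdenom : ∀ n, n ≠ r → Ypn (p n) n 1 1 + ysb n ≠ 0)
    (hroot : ysb r ≠ 0) :
    ∀ v : N → ℂ,
      (Aᴴ * Matrix.diagonal yL * A + Matrix.diagonal yT).mulVec v = 0 → v = 0 := by
  classical
  intro v hv
  -- depth function
  obtain ⟨d, hd⟩ : ∃ d : N → ℕ, ∀ n, n ≠ r → d n = d (p n) + 1 := by
    refine ⟨fun n => Nat.find (hreach n), fun n hn => ?_⟩
    have h := Nat.find_comp_succ (p := fun m => p^[m] n = r) (hreach n) (hreach (p n)) (by simpa using hn)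
    exact h
  have hne : ∀ n, n ≠ r → p n ≠ n := by
    intro n hn h
    have := hd n hn
    rw [h] at this
    omega
  -- child of a branch
  obtain ⟨ch, hch⟩ : ∃ ch : L → N, ∀ l, ch l ≠ r ∧
      ((e1 l = p (ch l) ∧ e2 l = ch l) ∨ (e1 l = ch l ∧ e2 l = p (ch l))) := by
    have : ∀ l, ∃ c, c ≠ r ∧ ((e1 l = p c ∧ e2 l = c) ∨ (e1 l = c ∧ e2 l = p c)) := by
      intro l
      rcases hbranch l with ⟨h1, h2⟩ | ⟨h1, h2⟩
      · exact ⟨e1 l, h1, Or.inr ⟨rfl, h2.symm⟩⟩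
      · exact ⟨e2 l, h1, Or.inl ⟨h2.symm, rfl⟩⟩
    choose ch hch using this
    exact ⟨ch, hch⟩
  have hfil : ∀ c, c ≠ r → (Finset.univ.filter (fun l => ch l = c)) =
      Finset.univ.filter (fun l => (e1 l = p c ∧ e2 l = c) ∨ (e1 l = c ∧ e2 l = p c)) := by
    intro c hc
    ext l
    simp only [Finset.mem_filter, Finset.mem_univ, true_and]
    constructor
    · rintro rfl
      exact (hch l).2
    · intro h
      by_contra hcc
      have h1 := hd c hc
      have h2 := hd _ (hch l).1
      have h3 := (hch l).2
      have key : ch l = p c ∧ c = p (ch l) := by grind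
      rw [← key.1] at h1
      rw [← key.2] at h2
      omega
  have hAv : ∀ l, A.mulVec v l = A l (p (ch l)) * v (p (ch l)) + A l (ch l) * v (ch l) := by
    intro l
    have hn := hne _ (hch l).1
    rw [Matrix.mulVec, dotProduct, ← Finset.sum_pair hn (f := fun j => A l j * v j)]
    symm
    apply Finset.sum_subset (Finset.subset_univ _)
    intro j _ hj
    have : A l j = 0 := by
      rw [hA]
      have := (hch l).2
      simp only [Finset.mem_insert, Finset.mem_singleton] at hj
      grind
    rw [this, zero_mul]
  -- contribution of parent-edge of c to node n
  have hF : ∀ c n, (∑ l ∈ Finset.univ.filter (fun l => ch l = c), star (A l n) * yL l * A.mulVec v l)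
      = (if c = n then (if n ≠ r then Ypn (p n) n 1 0 * v (p n) + Ypn (p n) n 1 1 * v n else 0) else 0)
        + (if c ≠ r ∧ p c = n then Ypn (p c) c 0 0 * v n + Ypn (p c) c 0 1 * v c else 0) := by
    intro c n
    by_cases hc : c = r
    · rw [Finset.sum_eq_zero]
      · grind
      · intro l hl
        exact absurd ((Finset.mem_filter.1 hl).2.trans hc) (hch l).1
    · have hcn := hne c hc
      by_cases h1 : c = n
      · subst h1
        rw [if_pos rfl, if_pos hc, if_neg (fun h => hcn h.2), hYpn, ← hfil c hc]
        simp only [Matrix.sum_apply, Matrix.smul_apply, Matrix.vecMulVec_apply, smul_eq_mul,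
          Finset.sum_mul, add_zero]
        rw [← Finset.sum_add_distrib]
        apply Finset.sum_congr rfl
        intro l hl
        rw [hAv, (Finset.mem_filter.1 hl).2]
        simp
        ring
      · by_cases h2 : p c = n
        · subst h2
          rw [if_neg h1, if_pos ⟨hc, rfl⟩, hYpn, ← hfil c hc]
          simp only [Matrix.sum_apply, Matrix.smul_apply, Matrix.vecMulVec_apply, smul_eq_mul,
            Finset.sum_mul, zero_add]
          rw [← Finset.sum_add_distrib]
          apply Finset.sum_congr rfl
          intro l hl
          rw [hAv, (Finset.mem_filter.1 hl).2]
          simp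
          ring
        · rw [if_neg h1, if_neg (fun h => h2 h.2), add_zero]
          apply Finset.sum_eq_zero
          intro l hl
          have hl' := (Finset.mem_filter.1 hl).2
          have : A l n = 0 := by
            rw [hA]
            have := (hch l).2
            grind
          rw [this]
          simp
  have heq : ∀ n, (if n ≠ r then Ypn (p n) n 1 0 * v (p n) + Ypn (p n) n 1 1 * v n else 0)
      + (∑ c ∈ Finset.univ.filter (fun c => c ≠ r ∧ p c = n),
          (Ypn (p c) c 0 0 * v n + Ypn (p c) c 0 1 * v c)) + yT n * v n = 0 := by
    intro n
    have h := congrFun hv n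
    rw [Matrix.add_mulVec, Pi.add_apply, ← Matrix.mulVec_mulVec, Matrix.mulVec_diagonal,
      Pi.zero_apply] at h
    refine Eq.trans ?_ h
    congr 1
    rw [Matrix.mulVec, dotProduct]
    simp only [Matrix.mul_diagonal, Matrix.conjTranspose_apply]
    rw [← Finset.sum_fiberwise Finset.univ ch]
    simp only [hF]
    rw [Finset.sum_filter, Finset.sum_add_distrib, Finset.sum_ite_eq', if_pos (Finset.mem_univ _)]
  have hstep : ∀ n, (∀ c, c ≠ r → p c = n → Ypn (p c) c 1 0 * v (p c) + (Ypn (p c) c 1 1 + ysb c) * v c = 0) →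
      (if n ≠ r then Ypn (p n) n 1 0 * v (p n) + Ypn (p n) n 1 1 * v n else 0) + ysb n * v n = 0 := by
    intro n hc
    have hs : ∑ c ∈ Finset.univ.filter (fun c => c ≠ r ∧ p c = n),
          (Ypn (p c) c 0 0 * v n + Ypn (p c) c 0 1 * v c) =
        (∑ c ∈ Finset.univ.filter (fun c => c ≠ r ∧ p c = n), yb c) * v n := by
      rw [Finset.sum_mul]
      apply Finset.sum_congr rfl
      intro c hcm
      obtain ⟨hcr, hpc⟩ := (Finset.mem_filter.1 hcm).2
      have h1 := hc c hcr hpc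
      have h2 := hdenom c hcr
      rw [hyb c hcr]
      rw [hpc] at h1 h2 ⊢
      field_simp
      linear_combination Ypn n c 0 1 * h1
    have := heq n
    rw [hs] at this
    rw [hysb n]
    linear_combination this
  have hup : ∀ k n, Finset.univ.sup d < d n + k → n ≠ r →
      Ypn (p n) n 1 0 * v (p n) + (Ypn (p n) n 1 1 + ysb n) * v n = 0 := by
    intro k
    induction k with
    | zero =>
      intro n hn
      have := Finset.le_sup (f := d) (Finset.mem_univ n)
      omega
    | succ k ih =>
      intro n hn hnr
      have := hstep n (fun c hc hpc => ih c (by have := hd c hc; rw [hpc] at this; omega) hc)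
      rw [if_pos hnr] at this
      linear_combination this
  have hall : ∀ n, n ≠ r → Ypn (p n) n 1 0 * v (p n) + (Ypn (p n) n 1 1 + ysb n) * v n = 0 :=
    fun n => hup (Finset.univ.sup d + 1) n (by omega)
  have hvr : v r = 0 := by
    have := hstep r (fun c hc _ => hall c hc)
    simpa [hroot] using this
  have hdown : ∀ k n, d n < k → v n = 0 := by
    intro k
    induction k with
    | zero => intro n hn; omega
    | succ k ih =>
      intro n hn
      by_cases hnr : n = r
      · rw [hnr, hvr]
      · have h := hall n hnr
        rw [ih (p n) (by have := hd n hnr; omega), mul_zero, zero_add] at h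
        exact (mul_eq_zero.1 h).resolve_left (hdenom n hnr)
  funext n
  exact hdown (d n + 1) n (by omega)
end

section
/- Let A ∈ ℂ^{L×N} be a generalized incidence matrix of a connected network with |L| = |N| − 1 (so the network graph is a tree), let y_L ∈ ℂ^L have all entries nonzero, and let Y_N = Aᴴ diag(y_L) A (no shunts, y_T = 0). Then Null(Y_N) = Null(A); in particular Null(Y_N) ⊆ Null(A) and rank(Y_N) = |N| − 1. -/
open Matrix

/-- Theorem 3, Condition 2. Let `A ∈ ℂ^{L×N}` be a generalized
incidence matrix of a connected network with `|L| = |N| - 1` (a tree), `y_L ∈ ℂ^L` with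
all entries nonzero, and `Y_N = Aᴴ diag(y_L) A` (no shunts). Then
`Null(Y_N) = Null(A)`; in particular `Null(Y_N) ⊆ Null(A)` and `rank Y_N = |N| - 1`. -/
theorem stmt13 {L N : Type*} [Fintype L] [Fintype N] [DecidableEq N] [DecidableEq L]
    [Nonempty L] [Nonempty N]
    (e1 e2 : L → N) (a : L → ℂ)
    (hends : ∀ l, e1 l ≠ e2 l) (ha : ∀ l, a l ≠ 0)
    (A : Matrix L N ℂ)
    (hA : ∀ l j, A l j = if j = e1 l then 1 else if j = e2 l then -(a l) else 0)
    (hconn : (SimpleGraph.fromRel fun i k => ∃ l, e1 l = i ∧ e2 l = k).Connected)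
    (hcard : Fintype.card L = Fintype.card N - 1)
    (yL : L → ℂ) (hyL : ∀ l, yL l ≠ 0) :
    {x : N → ℂ | (Aᴴ * Matrix.diagonal yL * A).mulVec x = 0} =
      {x : N → ℂ | A.mulVec x = 0} ∧
    (Aᴴ * Matrix.diagonal yL * A).rank = Fintype.card N - 1 := by
  have hmv : ∀ (x : N → ℂ) l, (A *ᵥ x) l = x (e1 l) - a l * x (e2 l) := by
    intro x l
    have h1 : ∀ j, A l j * x j = (if j = e1 l then x j else 0)
        - (if j = e2 l then a l * x j else 0) := by
      intro j
      rw [hA]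
      by_cases h : j = e1 l
      · have h2 : j ≠ e2 l := fun h' => hends l (h.symm.trans h')
        rw [if_pos h, if_pos h, if_neg h2]; ring
      · rw [if_neg h, if_neg h]
        split_ifs <;> ring
    simp only [Matrix.mulVec, dotProduct, h1, Finset.sum_sub_distrib, Finset.sum_ite_eq',
      Finset.sum_ite_eq, Finset.mem_univ, if_true]
  have hNc : 0 < Fintype.card N := Fintype.card_pos
  obtain ⟨r⟩ := (inferInstance : Nonempty N)
  have hzero : ∀ x : N → ℂ, A *ᵥ x = 0 → x r = 0 → x = 0 := by
    intro x hx hr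
    have step : ∀ i k, (SimpleGraph.fromRel fun i k => ∃ l, e1 l = i ∧ e2 l = k).Adj i k →
        x i = 0 → x k = 0 := by
      intro i k hik hi
      rw [SimpleGraph.fromRel_adj] at hik
      have key : ∀ l, x (e1 l) - a l * x (e2 l) = 0 := fun l => by
        rw [← hmv, hx]; rfl
      rcases hik.2 with ⟨l, h1, h2⟩ | ⟨l, h1, h2⟩
      · have := key l
        rw [h1, h2, hi] at this
        simpa [ha l] using this
      · have := key l
        rw [h1, h2, hi] at this
        simpa using this
    funext k
    obtain ⟨w⟩ := hconn.preconnected r k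
    induction w with
    | nil => exact hr
    | cons h p ih => exact ih (step _ _ h hr)
  have hker : Module.finrank ℂ (LinearMap.ker A.mulVecLin) ≤ 1 := by
    have hinj : Function.Injective
        ((LinearMap.proj r : (N → ℂ) →ₗ[ℂ] ℂ).comp (LinearMap.ker A.mulVecLin).subtype) := by
      rw [← LinearMap.ker_eq_bot, LinearMap.ker_eq_bot']
      rintro ⟨x, hx⟩ h
      exact Subtype.ext (hzero x hx h)
    simpa using LinearMap.finrank_le_finrank_of_injective hinj
  have hrn := LinearMap.finrank_range_add_finrank_ker A.mulVecLin
  rw [Module.finrank_fintype_fun_eq_card] at hrn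
  change A.rank + _ = _ at hrn
  have hle := A.rank_le_card_height
  have hrank : A.rank = Fintype.card L := by omega
  have hinjH : ∀ z : L → ℂ, Aᴴ *ᵥ z = 0 → z = 0 := by
    have h2 := LinearMap.finrank_range_add_finrank_ker Aᴴ.mulVecLin
    rw [Module.finrank_fintype_fun_eq_card] at h2
    change Aᴴ.rank + _ = _ at h2
    have hc : Aᴴ.rank = A.rank := by
      open ComplexOrder in exact Matrix.rank_conjTranspose A
    rw [hc] at h2
    have h3 : Module.finrank ℂ (LinearMap.ker Aᴴ.mulVecLin) = 0 := by omega
    rw [Submodule.finrank_eq_zero, LinearMap.ker_eq_bot'] at h3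
    exact h3
  have hnull : ∀ x : N → ℂ, (Aᴴ * Matrix.diagonal yL * A) *ᵥ x = 0 ↔ A *ᵥ x = 0 := by
    intro x
    rw [← Matrix.mulVec_mulVec, ← Matrix.mulVec_mulVec]
    constructor
    · intro h
      have h1 := hinjH _ h
      funext l
      have h2 := congrFun h1 l
      rw [Matrix.mulVec_diagonal] at h2
      simpa [hyL l] using h2
    · intro h
      rw [h]; simp
  refine ⟨Set.ext hnull, ?_⟩
  have h4 := LinearMap.finrank_range_add_finrank_ker (Aᴴ * Matrix.diagonal yL * A).mulVecLin
  have h5 : LinearMap.ker (Aᴴ * Matrix.diagonal yL * A).mulVecLin = LinearMap.ker A.mulVecLin :=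
    Submodule.ext hnull
  rw [Module.finrank_fintype_fun_eq_card, h5] at h4
  change Matrix.rank _ + _ = _ at h4
  omega
end

section
/- Let A ∈ ℂ^{L×N} be a generalized incidence matrix of a connected network, and suppose there exists k ∈ {1, −1} such that every branch admittance has the form y_l = i·k·b_l with b_l > 0 real, and every shunt admittance has the form y_{T,j} = i·k·c_j with c_j ≥ 0 real (i.e., the network consists only of inductors, or only of capacitors). Let Y_N = Aᴴ diag(y_L) A + diag(y_T). Then Null(Y_N) ⊆ Null(A). -/
open Matrix

/-- Theorem 3, Condition 3. Let `A ∈ ℂ^{L×N}` be a generalized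
incidence matrix of a connected network, and suppose there is `k ∈ {1, -1}` such that
every branch admittance is `y_l = i k b_l` with real `b_l > 0` and every shunt
admittance is `y_{T,j} = i k c_j` with real `c_j ≥ 0` (only inductors, or only
capacitors). Let `Y_N = Aᴴ diag(y_L) A + diag(y_T)`. Then `Null(Y_N) ⊆ Null(A)`. -/
theorem stmt14 {L N : Type*} [Fintype L] [Fintype N] [DecidableEq N] [DecidableEq L]
    [Nonempty L] [Nonempty N]
    (e1 e2 : L → N) (a : L → ℂ)
    (hends : ∀ l, e1 l ≠ e2 l) (ha : ∀ l, a l ≠ 0)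
    (A : Matrix L N ℂ)
    (hA : ∀ l j, A l j = if j = e1 l then 1 else if j = e2 l then -(a l) else 0)
    (hconn : (SimpleGraph.fromRel fun i k => ∃ l, e1 l = i ∧ e2 l = k).Connected)
    (yL : L → ℂ) (yT : N → ℂ) (k : ℝ) (hk : k = 1 ∨ k = -1)
    (b : L → ℝ) (hb : ∀ l, 0 < b l) (hyL : ∀ l, yL l = Complex.I * k * b l)
    (c : N → ℝ) (hc : ∀ j, 0 ≤ c j) (hyT : ∀ j, yT j = Complex.I * k * c j) :
    ∀ v : N → ℂ,
      (Aᴴ * Matrix.diagonal yL * A + Matrix.diagonal yT).mulVec v = 0 →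
      A.mulVec v = 0 := by
  intro v hv
  have h1 : star v ⬝ᵥ ((Aᴴ * Matrix.diagonal yL * A + Matrix.diagonal yT).mulVec v) = 0 := by
    rw [hv, dotProduct_zero]
  have h2 : star (A.mulVec v) ⬝ᵥ ((Matrix.diagonal yL).mulVec (A.mulVec v))
      + star v ⬝ᵥ ((Matrix.diagonal yT).mulVec v) = 0 := by
    rw [← h1, Matrix.add_mulVec, dotProduct_add, Matrix.star_mulVec,
      ← Matrix.dotProduct_mulVec, Matrix.mulVec_mulVec, Matrix.mulVec_mulVec, Matrix.mul_assoc]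
  set w := A.mulVec v with hw
  have h3 : Complex.I * k * (((∑ l, b l * Complex.normSq (w l)) +
      ∑ j, c j * Complex.normSq (v j) : ℝ) : ℂ) = 0 := by
    rw [← h2]
    simp only [dotProduct, Matrix.mulVec_diagonal, hyL, hyT, Pi.star_apply]
    push_cast
    rw [mul_add, Finset.mul_sum, Finset.mul_sum]
    congr 1 <;>
    · refine Finset.sum_congr rfl fun x _ => ?_
      rw [Complex.normSq_eq_conj_mul_self, Complex.star_def]
      ring
  have hk0 : (k : ℂ) ≠ 0 := by
    rcases hk with h | h <;> simp [h]
  have h4 : (∑ l, b l * Complex.normSq (w l)) + ∑ j, c j * Complex.normSq (v j) = 0 := by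
    have := (mul_eq_zero.mp h3).resolve_left (mul_ne_zero Complex.I_ne_zero hk0)
    exact_mod_cast this
  have hp1 : ∀ l ∈ Finset.univ, 0 ≤ b l * Complex.normSq (w l) :=
    fun l _ => mul_nonneg (hb l).le (Complex.normSq_nonneg _)
  have hp2 : 0 ≤ ∑ j, c j * Complex.normSq (v j) :=
    Finset.sum_nonneg fun j _ => mul_nonneg (hc j) (Complex.normSq_nonneg _)
  have h5 : ∑ l, b l * Complex.normSq (w l) = 0 := by
    have := Finset.sum_nonneg hp1
    linarith
  funext l
  have h6 := (Finset.sum_eq_zero_iff_of_nonneg hp1).mp h5 l (Finset.mem_univ l)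
  exact Complex.normSq_eq_zero.mp ((mul_eq_zero.mp h6).resolve_left (hb l).ne')
end

section
/- Let A ∈ ℂ^{L×N} be a generalized incidence matrix of a connected network, let y_L ∈ ℂ^L satisfy Re(y_l) > 0 for every branch l (strictly lossy branches), let y_T ∈ ℂ^N satisfy Re(y_{T,i}) ≥ 0 for every node i, and let Y_N = Aᴴ diag(y_L) A + diag(y_T). Then rank(Y_N) = rank(A) in case y_T = 0, and rank(Y_N) = |N| (Y_N is invertible) in case y_T ≠ 0. -/
open Matrix

theorem stmt15_key {L N : Type*} [Fintype L] [Fintype N] [DecidableEq N] [DecidableEq L]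
    (A : Matrix L N ℂ) (yL : L → ℂ) (hyL : ∀ l, 0 < (yL l).re)
    (yT : N → ℂ) (hyT : ∀ i, 0 ≤ (yT i).re) (x : N → ℂ)
    (hx : (Aᴴ * Matrix.diagonal yL * A + Matrix.diagonal yT) *ᵥ x = 0) :
    A *ᵥ x = 0 := by
  have h : star x ⬝ᵥ ((Aᴴ * Matrix.diagonal yL * A + Matrix.diagonal yT) *ᵥ x) = 0 := by
    rw [hx, dotProduct_zero]
  rw [Matrix.add_mulVec, dotProduct_add, Matrix.mul_assoc, ← Matrix.mulVec_mulVec,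
    Matrix.dotProduct_mulVec, ← Matrix.star_mulVec, ← Matrix.mulVec_mulVec] at h
  have h2 : (∑ l, (yL l).re * Complex.normSq ((A *ᵥ x) l)) +
      (∑ i, (yT i).re * Complex.normSq (x i)) = 0 := by
    have h3 := congrArg Complex.re h
    simp only [dotProduct, Matrix.mulVec_diagonal, Complex.add_re, Complex.re_sum,
      Pi.star_apply, Complex.zero_re] at h3
    rw [← h3]
    congr 1 <;> refine Finset.sum_congr rfl fun l _ => ?_ <;>
      simp [Complex.normSq_apply, Complex.mul_re, Complex.mul_im] <;> ring
  have hn2 : 0 ≤ ∑ i, (yT i).re * Complex.normSq (x i) :=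
    Finset.sum_nonneg fun i _ => mul_nonneg (hyT i) (Complex.normSq_nonneg _)
  have hn1 : ∀ l ∈ Finset.univ, 0 ≤ (yL l).re * Complex.normSq ((A *ᵥ x) l) :=
    fun l _ => mul_nonneg (hyL l).le (Complex.normSq_nonneg _)
  have h0 : ∑ l, (yL l).re * Complex.normSq ((A *ᵥ x) l) = 0 := by
    have := Finset.sum_nonneg hn1
    linarith
  funext l
  have := (Finset.sum_eq_zero_iff_of_nonneg hn1).1 h0 l (Finset.mem_univ l)
  rcases mul_eq_zero.1 this with h | h
  · exact absurd h (hyL l).ne'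
  · exact Complex.normSq_eq_zero.1 h

/-- Theorem 1 under strict lossiness. Let `A ∈ ℂ^{L×N}` be a
generalized incidence matrix of a connected network, `y_L ∈ ℂ^L` with `Re (y_L l) > 0`
for every branch (strictly lossy branches), `y_T ∈ ℂ^N` with `Re (y_T i) ≥ 0` for
every node, and `Y_N = Aᴴ diag(y_L) A + diag(y_T)`. Then `rank Y_N = rank A` when
`y_T = 0`, and `rank Y_N = |N|` (i.e. `Y_N` is invertible) when `y_T ≠ 0`. -/
theorem stmt15 {L N : Type*} [Fintype L] [Fintype N] [DecidableEq N] [DecidableEq L]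
    [Nonempty L] [Nonempty N]
    (e1 e2 : L → N) (a : L → ℂ)
    (hends : ∀ l, e1 l ≠ e2 l) (ha : ∀ l, a l ≠ 0)
    (A : Matrix L N ℂ)
    (hA : ∀ l j, A l j = if j = e1 l then 1 else if j = e2 l then -(a l) else 0)
    (hconn : (SimpleGraph.fromRel fun i k => ∃ l, e1 l = i ∧ e2 l = k).Connected)
    (yL : L → ℂ) (hyL : ∀ l, 0 < (yL l).re)
    (yT : N → ℂ) (hyT : ∀ i, 0 ≤ (yT i).re) :
    (yT = 0 → (Aᴴ * Matrix.diagonal yL * A + Matrix.diagonal yT).rank = A.rank) ∧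
    (yT ≠ 0 → (Aᴴ * Matrix.diagonal yL * A + Matrix.diagonal yT).rank = Fintype.card N ∧
      IsUnit (Aᴴ * Matrix.diagonal yL * A + Matrix.diagonal yT)) := by
  constructor
  · rintro rfl
    have hk : LinearMap.ker (Aᴴ * Matrix.diagonal yL * A + Matrix.diagonal 0).mulVecLin
        = LinearMap.ker A.mulVecLin := by
      ext x
      simp only [LinearMap.mem_ker, Matrix.mulVecLin_apply]
      constructor
      · exact stmt15_key A yL hyL 0 hyT x
      · intro h
        rw [show (Matrix.diagonal (0 : N → ℂ)) = 0 from Matrix.diagonal_zero, add_zero,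
          ← Matrix.mulVec_mulVec, h, Matrix.mulVec_zero]
    have h1 := LinearMap.finrank_range_add_finrank_ker
      (Aᴴ * Matrix.diagonal yL * A + Matrix.diagonal 0).mulVecLin
    have h2 := LinearMap.finrank_range_add_finrank_ker A.mulVecLin
    rw [hk] at h1
    unfold Matrix.rank
    omega
  · intro hne
    have hu : IsUnit (Aᴴ * Matrix.diagonal yL * A + Matrix.diagonal yT) := by
      rw [← Matrix.mulVec_injective_iff_isUnit]
      refine (injective_iff_map_eq_zero (Aᴴ * Matrix.diagonal yL * A
        + Matrix.diagonal yT).mulVecLin).2 fun x hx => ?_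
      rw [Matrix.mulVecLin_apply] at hx
      have hAx := stmt15_key A yL hyL yT hyT x hx
      obtain ⟨i, hi⟩ := Function.ne_iff.1 hne
      have hxi : x i = 0 := by
        rw [Matrix.add_mulVec, ← Matrix.mulVec_mulVec, hAx, Matrix.mulVec_zero, zero_add] at hx
        have := congrFun hx i
        rw [Matrix.mulVec_diagonal] at this
        exact (mul_eq_zero.1 this).resolve_left hi
      have hrow : ∀ l, x (e1 l) = a l * x (e2 l) := by
        intro l
        have h := congrFun hAx l
        have h' : ∀ j, A l j * x j = (if j = e1 l then x j else 0)
            + (if j = e2 l then -(a l) * x j else 0) := by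
          intro j
          rw [hA]
          by_cases h1 : j = e1 l
          · have : j ≠ e2 l := fun h2 => hends l (h1.symm.trans h2)
            simp [h1, hends l]
          · simp [h1]
        simp only [Matrix.mulVec, dotProduct, h', Finset.sum_add_distrib, Finset.sum_ite_eq',
          Finset.sum_ite_eq, Finset.mem_univ, if_true, Pi.zero_apply] at h
        linear_combination h
      funext j
      obtain ⟨w⟩ := hconn.preconnected i j
      clear hi
      induction w with
      | nil => exact hxi
      | cons hadj _ ih =>
        apply ih
        rw [SimpleGraph.fromRel_adj] at hadj
        obtain ⟨_, ⟨l, rfl, rfl⟩ | ⟨l, rfl, rfl⟩⟩ := hadj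
        · rw [hrow l] at hxi
          exact (mul_eq_zero.1 hxi).resolve_left (ha l)
        · rw [hrow l, hxi, mul_zero]
    exact ⟨Matrix.rank_of_isUnit _ hu, hu⟩
end
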